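/- arXiv:2303.07793 — 5 statements merged into one kernel-verified Lean document; each statement's English description precedes it below -/
import Mathlib

section
/- Let Ω be a subset of ℝ^n. Then Ω is nearly convex if and only if the closure of Ω is convex and ri(cl Ω) ⊆ Ω. -/
/-!
Everything rests on the accessibility lemma `openSegment_subset_ri`: for convex `D`, an open
segment from a point of `ri D` to a point of `closure D` stays in `ri D`. Together with the fact
that `ri D` is nonempty for nonempty convex `D`, it gives both directions.

If `C ⊆ Ω ⊆ closure C` with `C` convex, then `closure Ω = closure C` is convex. For
`a ∈ ri (closure C)` and `c ∈ ri C`, the segment from `c` to `a` can be prolonged slightly beyond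
`a` to some `b ∈ closure C`; then `a` lies on the open segment from `c` to `b`, hence in `C ⊆ Ω`.

Conversely, if `closure Ω` is convex, then `ri (closure Ω)` is a convex set dense in `closure Ω`,
so it serves as the convex set witnessing that `Ω` is nearly convex.
-/

open Set Metric

noncomputable section

/-- A set is *nearly convex* if it lies between a convex set and its closure. -/
def NearlyConvex {E : Type*} [NormedAddCommGroup E] [NormedSpace ℝ E] (s : Set E) : Prop :=
  ∃ C : Set E, Convex ℝ C ∧ C ⊆ s ∧ s ⊆ closure C

/-- The *relative interior* of a set: points `a ∈ s` admitting `δ > 0` with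
`B(a,δ) ∩ aff s ⊆ s`. -/
def ri {E : Type*} [NormedAddCommGroup E] [NormedSpace ℝ E] (s : Set E) : Set E :=
  {a | a ∈ s ∧ ∃ δ > 0, Metric.ball a δ ∩ (affineSpan ℝ s : Set E) ⊆ s}

section RelativeInterior

variable {E : Type*} [NormedAddCommGroup E] [NormedSpace ℝ E]

lemma ri_subset (s : Set E) : ri s ⊆ s := fun _ h => h.1

lemma lineMap_mem_affineSpan {s : Set E} {p q : E} (t : ℝ) (hp : p ∈ affineSpan ℝ s)
    (hq : q ∈ affineSpan ℝ s) : p + t • (q - p) ∈ affineSpan ℝ s := by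
  have h := AffineMap.lineMap_mem t hp hq
  rwa [AffineMap.lineMap_apply_module', add_comm] at h

variable [FiniteDimensional ℝ E]

lemma closure_subset_affineSpan (s : Set E) : closure s ⊆ (affineSpan ℝ s : Set E) :=
  closure_minimal (subset_affineSpan ℝ s) (AffineSubspace.closed_of_finiteDimensional _)

lemma ri_nonempty {D : Set E} (hD : Convex ℝ D) (hne : D.Nonempty) : (ri D).Nonempty := by
  obtain ⟨a, ha⟩ := hne.intrinsicInterior hD
  refine ⟨a, intrinsicInterior_subset ha, ?_⟩
  obtain ⟨y, hy, rfl⟩ := mem_intrinsicInterior.1 ha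
  obtain ⟨δ, hδ, hball⟩ := Metric.mem_nhds_iff.1 (mem_interior_iff_mem_nhds.1 hy)
  refine ⟨δ, hδ, ?_⟩
  rintro z ⟨hz, hzD⟩
  exact @hball ⟨z, hzD⟩ hz

/-- Accessibility lemma: for convex `D`, open segments from `ri D` to `closure D` lie in `ri D`. -/
lemma openSegment_subset_ri {D : Set E} (hD : Convex ℝ D) {x y : E} (hx : x ∈ ri D)
    (hy : y ∈ closure D) : openSegment ℝ x y ⊆ ri D := by
  obtain ⟨hxD, δ, hδ, hball⟩ := hx
  rintro z ⟨a, b, ha, hb, hab, rfl⟩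
  have hb' : b = 1 - a := by linarith
  have hr : 0 < a * δ / 2 := by positivity
  obtain ⟨y', hy', hyy'⟩ := Metric.mem_closure_iff.1 hy _ hr
  have key : ball (a • x + b • y) (a * δ / 2) ∩ (affineSpan ℝ D : Set E) ⊆ D := by
    rintro z' ⟨hz', hzD⟩
    -- `x'` is the point of the line through `y'` and `z'` for which `z' = a • x' + b • y'`.
    set x' : E := y' + a⁻¹ • (z' - y') with hx'
    have hx'D : x' ∈ D := by
      refine hball ⟨?_, lineMap_mem_affineSpan _ (subset_affineSpan ℝ D hy') hzD⟩
      have hax : x' - x = a⁻¹ • ((z' - (a • x + b • y)) + b • (y - y')) := by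
        rw [hx', hb']
        match_scalars <;> field_simp <;> ring
      rw [mem_ball, dist_eq_norm, hax, norm_smul, Real.norm_of_nonneg (by positivity),
        inv_mul_lt_iff₀ ha]
      rw [mem_ball, dist_eq_norm] at hz'
      rw [dist_eq_norm] at hyy'
      have h1 : ‖b • (y - y')‖ ≤ ‖y - y'‖ := by
        rw [norm_smul, Real.norm_of_nonneg hb.le]
        exact mul_le_of_le_one_left (norm_nonneg _) (by linarith)
      linarith [norm_add_le (z' - (a • x + b • y)) (b • (y - y'))]
    have hzx : z' = a • x' + b • y' := by
      rw [hx', hb']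
      match_scalars <;> field_simp <;> ring
    rw [hzx]
    exact hD hx'D hy' ha.le hb.le hab
  refine ⟨key ⟨mem_ball_self hr, ?_⟩, _, hr, key⟩
  have h := lineMap_mem_affineSpan b (subset_affineSpan ℝ D hxD) (closure_subset_affineSpan D hy)
  have hz : a • x + b • y = x + b • (y - x) := by
    rw [hb']
    module
  rw [hz]
  exact h

lemma convex_ri {D : Set E} (hD : Convex ℝ D) : Convex ℝ (ri D) :=
  convex_iff_openSegment_subset.2 fun _ hx _ hy =>
    openSegment_subset_ri hD hx (subset_closure (ri_subset D hy))

lemma subset_closure_ri {D : Set E} (hD : Convex ℝ D) : D ⊆ closure (ri D) := by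
  intro x hx
  obtain ⟨c, hc⟩ := ri_nonempty hD ⟨x, hx⟩
  exact closure_mono (openSegment_subset_ri hD hc (subset_closure hx))
    (segment_subset_closure_openSegment (right_mem_segment ℝ c x))

lemma ri_closure_subset {C : Set E} (hC : Convex ℝ C) : ri (closure C) ⊆ C := by
  rintro a ⟨haC, δ, hδ, hball⟩
  obtain ⟨c, hc⟩ := ri_nonempty hC (closure_nonempty_iff.1 ⟨a, haC⟩)
  have hcC : c ∈ closure C := subset_closure (ri_subset C hc)
  -- A positive step `t` for which the prolongation of `[c, a]` beyond `a` stays in the ball.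
  obtain ⟨t, ht, hta⟩ : ∃ t : ℝ, 0 < t ∧ t * ‖a - c‖ < δ := by
    refine ⟨δ / (‖a - c‖ + 1), by positivity, ?_⟩
    rw [div_mul_eq_mul_div, div_lt_iff₀ (by positivity)]
    nlinarith [norm_nonneg (a - c)]
  have hb : a + (-t) • (c - a) ∈ closure C := by
    refine hball ⟨?_, lineMap_mem_affineSpan _ (subset_affineSpan ℝ _ haC)
      (subset_affineSpan ℝ _ hcC)⟩
    rwa [mem_ball, dist_eq_norm, add_sub_cancel_left, norm_smul, norm_neg,
      Real.norm_of_nonneg ht.le, norm_sub_rev]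
  refine ri_subset C (openSegment_subset_ri hC hc hb
    ⟨t / (1 + t), 1 / (1 + t), by positivity, by positivity, by field_simp; ring, ?_⟩)
  match_scalars <;> field_simp <;> ring

end RelativeInterior

theorem nearlyConvex_iff_closure_convex_and_ri_subset (n : ℕ)
    (Ω : Set (EuclideanSpace ℝ (Fin n))) :
    NearlyConvex Ω ↔ Convex ℝ (closure Ω) ∧ ri (closure Ω) ⊆ Ω := by
  constructor
  · rintro ⟨C, hC, hCΩ, hΩC⟩
    have hcl : closure Ω = closure C :=
      (closure_minimal hΩC isClosed_closure).antisymm (closure_mono hCΩ)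
    rw [hcl]
    exact ⟨hC.closure, (ri_closure_subset hC).trans hCΩ⟩
  · rintro ⟨hconv, hri⟩
    exact ⟨ri (closure Ω), convex_ri hconv, hri, subset_closure.trans (subset_closure_ri hconv)⟩
end
end

section
/- Let f : ℝ^n → [−∞, ∞] be a nearly convex function. If there exists a point x̄ ∈ ri(dom f) with f(x̄) ∈ ℝ, then f is proper, i.e., f(x) > −∞ for all x ∈ ℝ^n. -/
/-!
Suppose `f x = ⊥` and let `C` be convex with `C ⊆ epi f ⊆ cl C`. Pick `p = (p₁, p₂)` in the relative
interior of `C`. Since `xbar ∈ ri (dom f)`, the segment from `p₁` to `xbar` can be prolonged slightly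
beyond `xbar` to a point `y`, and the segment from `x` to `y` slightly beyond `y` to a point
`z ∈ dom f`. The whole vertical line over `x` lies in `cl C`, as does some point over `z`, so by
convexity of `cl C` the whole vertical line over `y` lies in `cl C`. Open segments from `p` to points
of `cl C` stay in `C` (`combo_mem_of_ri_of_closure`), so the whole vertical line over `xbar` lies in
`C ⊆ epi f`, which contradicts `f xbar ∈ ℝ`.
-/

open Set Metric

noncomputable section

/-- The epigraph of an extended-real-valued function. -/
def epiF {E : Type*} (f : E → EReal) : Set (E × ℝ) := {p | f p.1 ≤ (p.2 : EReal)}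

/-- The effective domain of an extended-real-valued function. -/
def domF {E : Type*} (f : E → EReal) : Set E := {x | f x < ⊤}

theorem exists_mem_ri_of_convex {E : Type*} [NormedAddCommGroup E] [NormedSpace ℝ E]
    [FiniteDimensional ℝ E] {C : Set E} (hC : Convex ℝ C) (hne : C.Nonempty) :
    ∃ p, p ∈ ri C := by
  obtain ⟨p, hp⟩ := hne.intrinsicInterior hC
  refine ⟨p, intrinsicInterior_subset hp, ?_⟩
  obtain ⟨y, hy, rfl⟩ := mem_intrinsicInterior.1 hp
  obtain ⟨δ, hδ, hball⟩ := Metric.isOpen_iff.1 isOpen_interior y hy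
  refine ⟨δ, hδ, ?_⟩
  rintro w ⟨hw, hwA⟩
  have : (⟨w, hwA⟩ : affineSpan ℝ C) ∈ Metric.ball y δ := hw
  have hmem := interior_subset (hball this)
  exact hmem

/-- The open segment from a relative interior point `p` to a point `q` of the closure stays in
the convex set: replacing `q` by a nearby point of `C` perturbs `p` only within `aff C`. -/
theorem combo_mem_of_ri_of_closure {E : Type*} [NormedAddCommGroup E] [NormedSpace ℝ E]
    [FiniteDimensional ℝ E] {C : Set E} (hC : Convex ℝ C) {p q : E} (hp : p ∈ ri C)
    (hq : q ∈ closure C) {a b : ℝ} (ha : 0 < a) (hb : 0 < b) (hab : a + b = 1) :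
    a • p + b • q ∈ C := by
  obtain ⟨hpC, δ, hδ, hball⟩ := hp
  have hcl : IsClosed (affineSpan ℝ C : Set E) := AffineSubspace.closed_of_finiteDimensional _
  have hqA : q ∈ affineSpan ℝ C := closure_minimal (subset_affineSpan ℝ C) hcl hq
  obtain ⟨q', hq'C, hq'⟩ := Metric.mem_closure_iff.1 hq (a / b * δ) (by positivity)
  have hp' : p + (b / a) • (q - q') ∈ C := by
    refine hball ⟨?_, ?_⟩
    · rw [mem_ball, dist_eq_norm, add_sub_cancel_left, norm_smul, ← dist_eq_norm,
        Real.norm_of_nonneg (by positivity)]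
      calc b / a * dist q q' < b / a * (a / b * δ) := by gcongr
        _ = δ := by field_simp
    · have := AffineSubspace.smul_vsub_vadd_mem (affineSpan ℝ C) (b / a) hqA
        (subset_affineSpan ℝ C hq'C) (subset_affineSpan ℝ C hpC)
      simpa [add_comm] using this
  have := hC hp' hq'C ha.le hb.le hab
  convert this using 1
  rw [smul_add, smul_smul, mul_div_cancel₀ _ ha.ne']
  module

/-- A segment from a point of the set to a relative interior point `a` can be
prolonged beyond `a` inside the relative interior. -/
theorem exists_prolong_mem_ri {E : Type*} [NormedAddCommGroup E] [NormedSpace ℝ E]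
    {s : Set E} {a x : E} (ha : a ∈ ri s) (hx : x ∈ s) :
    ∃ t > (0 : ℝ), a + t • (a - x) ∈ ri s := by
  obtain ⟨has, δ, hδ, hball⟩ := ha
  obtain ⟨t, ht, hlt⟩ : ∃ t > (0 : ℝ), t * ‖a - x‖ < δ := by
    refine ⟨δ / (‖a - x‖ + 1), by positivity, ?_⟩
    rw [div_mul_eq_mul_div, div_lt_iff₀ (by positivity)]
    nlinarith
  have hd : dist (a + t • (a - x)) a < δ := by
    rwa [dist_eq_norm, add_sub_cancel_left, norm_smul, Real.norm_of_nonneg ht.le]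
  refine ⟨t, ht, hball ⟨hd, ?_⟩, δ - dist (a + t • (a - x)) a, by linarith, ?_⟩
  · have := AffineSubspace.smul_vsub_vadd_mem (affineSpan ℝ s) t
      (subset_affineSpan ℝ s has) (subset_affineSpan ℝ s hx) (subset_affineSpan ℝ s has)
    simpa [add_comm] using this
  · rintro w ⟨hw, hwA⟩
    refine hball ⟨?_, hwA⟩
    rw [mem_ball] at hw ⊢
    linarith [dist_triangle w (a + t • (a - x)) a]

theorem prolong_combo {E : Type*} [AddCommGroup E] [Module ℝ E] (a x : E) {t : ℝ} (ht : 0 < t) :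
    (t / (1 + t)) • x + (1 / (1 + t)) • (a + t • (a - x)) = a := by
  match_scalars <;> field_simp; ring

theorem exists_mem_epiF {E : Type*} {f : E → EReal} {x : E} (hx : x ∈ domF f) :
    ∃ μ : ℝ, (x, μ) ∈ epiF f := by
  obtain ⟨μ, hμ, -⟩ := EReal.lt_iff_exists_real_btwn.1 (show f x < ⊤ from hx)
  exact ⟨μ, hμ.le⟩

theorem nearlyConvex_proper (n : ℕ) (f : EuclideanSpace ℝ (Fin n) → EReal)
    (hf : NearlyConvex (epiF f)) (xbar : EuclideanSpace ℝ (Fin n))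
    (hxbar : xbar ∈ ri (domF f)) (hreal : ∃ r : ℝ, f xbar = (r : EReal)) :
    ∀ x, ⊥ < f x := by
  intro x
  by_contra hx
  have hx : f x = ⊥ := by simpa using hx
  obtain ⟨r, hr⟩ := hreal
  obtain ⟨C, hC, hCs, hsC⟩ := hf
  obtain ⟨p, hp⟩ : ∃ p, p ∈ ri C := by
    refine exists_mem_ri_of_convex hC (closure_nonempty_iff.1 ⟨(x, 0), hsC ?_⟩)
    simp [epiF, hx]
  have hxdom : x ∈ domF f := by simp [domF, hx]
  have hpdom : p.1 ∈ domF f := lt_of_le_of_lt (hCs hp.1) (EReal.coe_lt_top _)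
  obtain ⟨t, ht, hy⟩ := exists_prolong_mem_ri hxbar hpdom
  obtain ⟨u, hu, hz⟩ := exists_prolong_mem_ri hy hxdom
  set y := xbar + t • (xbar - p.1) with hydef
  obtain ⟨μ, hμ⟩ := exists_mem_epiF hz.1
  have hline : ∀ ν : ℝ, (y, ν) ∈ closure C := by
    intro ν
    -- The height over `x` is chosen so that the combination has height `ν`.
    have hxC : (x, (ν - 1 / (1 + u) * μ) * ((1 + u) / u)) ∈ closure C :=
      hsC (by simp [epiF, hx])
    have h := hC.closure hxC (hsC hμ) (show 0 ≤ u / (1 + u) by positivity)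
      (show 0 ≤ 1 / (1 + u) by positivity) (by field_simp; ring)
    convert h using 1
    refine Prod.ext (prolong_combo y x hu).symm ?_
    simp only [Prod.snd_add, Prod.smul_snd, smul_eq_mul]
    field_simp
    ring
  -- The height over `y` is chosen so that the combination has height `r - 1`.
  have h := combo_mem_of_ri_of_closure hC hp
    (hline ((r - 1 - t / (1 + t) * p.2) * (1 + t)))
    (show 0 < t / (1 + t) by positivity) (show 0 < 1 / (1 + t) by positivity)
    (by field_simp; ring)
  have heq : (t / (1 + t)) • p + (1 / (1 + t)) •
      (y, (r - 1 - t / (1 + t) * p.2) * (1 + t)) = (xbar, r - 1) := by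
    refine Prod.ext (prolong_combo xbar p.1 ht) ?_
    simp only [Prod.snd_add, Prod.smul_snd, smul_eq_mul]
    field_simp
    ring
  rw [heq] at h
  have hle : f xbar ≤ ((r - 1 : ℝ) : EReal) := hCs h
  rw [hr, EReal.coe_le_coe_iff] at hle
  linarith
end
end

section
/- Let A : ℝ^n → ℝ^p be a linear mapping and let Θ ⊆ ℝ^p be a nearly convex set. If A⁻¹(ri Θ) ≠ ∅, then ri(A⁻¹(Θ)) = A⁻¹(ri Θ). -/
/-!
The inclusion `A⁻¹(ri Θ) ⊆ ri (A⁻¹ Θ)` is continuity of `A` together with the fact that `A` maps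
`aff (A⁻¹ Θ)` into `aff Θ`.

For the other inclusion, let `C` be convex with `C ⊆ Θ ⊆ cl C`. Both sets have the same affine hull
(affine subspaces are closed), hence `ri C ⊆ ri Θ`. If `c ∈ ri C`, `x ∈ aff C` and the segment from
`c` to `x` can be prolonged a little beyond `x` inside `cl C`, then `x ∈ ri C`
(`mem_ri_of_prolong`). On the other hand, a segment from a point of `aff S` to a point of
`ri S` can always be prolonged inside
`S` (`exists_prolong`). Starting from some `c ∈ ri C`, which exists in finite dimension, this
puts the given point `A x₀ ∈ ri Θ` in `ri C`. For `x ∈ ri (A⁻¹ Θ)`, prolonging the segment from `x₀`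
to `x` in `A⁻¹ Θ` and applying `A` then gives `A x ∈ ri C ⊆ ri Θ`.
-/

open Set Metric

noncomputable section

section Helpers

variable {E : Type*} [NormedAddCommGroup E] [NormedSpace ℝ E]

lemma exists_prolong {S : Set E} {x y : E} (hx : x ∈ ri S) (hy : y ∈ affineSpan ℝ S) :
    ∃ s : ℝ, 0 < s ∧ x + s • (x - y) ∈ S := by
  obtain ⟨hxS, δ, hδ, hsub⟩ := hx
  have hN : 0 < ‖x - y‖ + 1 := by positivity
  refine ⟨δ / (‖x - y‖ + 1), by positivity, hsub ⟨?_, ?_⟩⟩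
  · rw [mem_ball, dist_eq_norm, add_sub_cancel_left, norm_smul, Real.norm_eq_abs,
      abs_of_pos (by positivity), div_mul_eq_mul_div, div_lt_iff₀ hN]
    nlinarith
  · have := AffineMap.lineMap_mem (-(δ / (‖x - y‖ + 1))) (subset_affineSpan ℝ S hxS) hy
    rw [AffineMap.lineMap_apply_module', ← SetLike.mem_coe] at this
    convert this using 1
    module

/-- A neighbourhood of `x` in `aff C` is filled by convex combinations of points of `C` near `c`
and one point of `C` approximating the prolonged point `x + s (x - c)`. -/
lemma mem_ri_of_prolong {C : Set E} (hC : Convex ℝ C) {c x : E} (hc : c ∈ ri C) {s : ℝ}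
    (hs : 0 < s) (hxC : x ∈ affineSpan ℝ C) (hx : x + s • (x - c) ∈ closure C) : x ∈ ri C := by
  obtain ⟨hcC, δ, hδ, hsub⟩ := hc
  -- `w = (s / (1 + s)) u + (1 / (1 + s)) b` with `u = w + s⁻¹ (w - b)`, and `u` is close to `c`.
  have hr : 0 < s * δ / (2 + s) := by positivity
  obtain ⟨b, hbC, hb⟩ := Metric.mem_closure_iff.1 hx _ hr
  have key : ∀ w ∈ affineSpan ℝ C, dist w x < s * δ / (2 + s) → w ∈ C := by
    intro w hw hwx
    have hu : w + s⁻¹ • (w - b) ∈ C := by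
      refine hsub ⟨?_, ?_⟩
      · have e : w + s⁻¹ • (w - b) - c
            = s⁻¹ • ((1 + s) • (w - x) + (x + s • (x - c) - b)) := by
          match_scalars <;> field_simp <;> ring
        rw [mem_ball, dist_eq_norm, e, norm_smul, norm_inv, Real.norm_eq_abs, abs_of_pos hs,
          inv_mul_lt_iff₀ hs]
        rw [dist_eq_norm] at hwx hb
        calc _ ≤ ‖(1 + s) • (w - x)‖ + ‖x + s • (x - c) - b‖ := norm_add_le _ _
          _ = (1 + s) * ‖w - x‖ + ‖x + s • (x - c) - b‖ := by
            rw [norm_smul, Real.norm_eq_abs, abs_of_pos (by positivity)]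
          _ < (1 + s) * (s * δ / (2 + s)) + s * δ / (2 + s) := by gcongr
          _ = s * δ := by field_simp; ring
      · have := AffineMap.lineMap_mem (-s⁻¹) hw (subset_affineSpan ℝ C hbC)
        rw [AffineMap.lineMap_apply_module', ← SetLike.mem_coe] at this
        convert this using 1
        module
    have := hC hu hbC (a := s / (1 + s)) (b := 1 / (1 + s)) (by positivity) (by positivity)
      (by field_simp; ring)
    convert this using 1
    match_scalars <;> field_simp <;> ring
  exact ⟨key x hxC (by rwa [dist_self]), _, hr, fun w hw => key w hw.2 hw.1⟩

lemma affineSpan_eq_of_subset_closure [FiniteDimensional ℝ E] {C S : Set E} (h₁ : C ⊆ S)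
    (h₂ : S ⊆ closure C) : affineSpan ℝ S = affineSpan ℝ C := by
  refine le_antisymm (affineSpan_le.2 (h₂.trans ?_)) (affineSpan_mono ℝ h₁)
  exact closure_minimal (subset_affineSpan ℝ C) (AffineSubspace.closed_of_finiteDimensional _)

lemma ri_nonempty_of_convex [FiniteDimensional ℝ E] {C : Set E} (hC : Convex ℝ C)
    (hne : C.Nonempty) : (ri C).Nonempty := by
  obtain ⟨x, hx⟩ := hne.intrinsicInterior hC
  obtain ⟨y, hy, rfl⟩ := mem_intrinsicInterior.1 hx
  obtain ⟨δ, hδ, hsub⟩ := Metric.mem_nhds_iff.1 (mem_interior_iff_mem_nhds.1 hy)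
  exact ⟨y, intrinsicInterior_subset hx, δ, hδ, fun z hz => @hsub ⟨z, hz.2⟩ hz.1⟩

end Helpers

theorem ri_linear_preimage (n p : ℕ)
    (A : EuclideanSpace ℝ (Fin n) →ₗ[ℝ] EuclideanSpace ℝ (Fin p))
    (Θ : Set (EuclideanSpace ℝ (Fin p))) (hΘ : NearlyConvex Θ)
    (hne : (⇑A ⁻¹' ri Θ).Nonempty) :
    ri (⇑A ⁻¹' Θ) = ⇑A ⁻¹' ri Θ := by
  obtain ⟨C, hC, hCΘ, hΘC⟩ := hΘ
  obtain ⟨x₀, hx₀⟩ := hne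
  have haff := affineSpan_eq_of_subset_closure hCΘ hΘC
  have hri : ri C ⊆ ri Θ := by
    rintro z ⟨hz, δ, hδ, hsub⟩
    exact ⟨hCΘ hz, δ, hδ, by rw [haff]; exact hsub.trans hCΘ⟩
  obtain ⟨c, hc⟩ := ri_nonempty_of_convex hC (closure_nonempty_iff.1 ⟨_, hΘC hx₀.1⟩)
  have hAx₀ : A x₀ ∈ ri C := by
    obtain ⟨s, hs, h⟩ := exists_prolong hx₀ (subset_affineSpan ℝ Θ (hCΘ hc.1))
    exact mem_ri_of_prolong hC hc hs (haff ▸ subset_affineSpan ℝ Θ hx₀.1) (hΘC h)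
  apply Subset.antisymm
  · intro x hx
    obtain ⟨s, hs, h⟩ := exists_prolong hx (subset_affineSpan ℝ (⇑A ⁻¹' Θ) hx₀.1)
    refine hri (mem_ri_of_prolong hC hAx₀ hs (haff ▸ subset_affineSpan ℝ Θ hx.1) (hΘC ?_))
    simpa using h
  · rintro x ⟨hxΘ, δ, hδ, hsub⟩
    obtain ⟨ε, hε, hball⟩ := Metric.continuousAt_iff.1
      A.continuous_of_finiteDimensional.continuousAt δ hδ
    refine ⟨hxΘ, ε, hε, fun y hy => hsub ⟨hball hy.1, ?_⟩⟩
    have hle : affineSpan ℝ (⇑A ⁻¹' Θ) ≤ (affineSpan ℝ Θ).comap A.toAffineMap :=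
      affineSpan_le.2 fun z hz => subset_affineSpan ℝ Θ hz
    exact hle hy.2
end
end

section
/- Let Θ ⊆ ℝ^n be a nearly convex set, and let F : ℝ^n ⇒ ℝ^p and G : ℝ^n ⇒ ℝ^q be nearly convex set-valued mappings with ri(dom F) ∩ ri(dom G) ∩ ri Θ ≠ ∅. Define Φ : ℝ^n × ℝ^q ⇒ ℝ^p by Φ(x, y) = F(x) if x ∈ Θ and y ∈ G(x), and Φ(x, y) = ∅ otherwise. Then Φ is a nearly convex set-valued mapping. -/
/-!
Let `T`, `A`, `B` be convex sets witnessing that `Θ`, `gph F`, `gph G` are nearly convex. The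
witness for the composite mapping is the set `K` of all `((x, y), z)` with `x ∈ ri T`,
`(x, z) ∈ ri A` and `(x, y) ∈ ri B`.

Everything rests on the line segment principle `ri_combo`: moving from a point of the closure of a
convex set towards a point of its relative interior, one is at once in the relative interior. It
gives the convexity of `K`, and, as soon as `K` has a point, it shows that every point of the graph
of the composite mapping is a limit of points of `K`.

To find a point of `K`, take `x₀` in the three relative interiors of the hypothesis and any
`(x₁, z₁) ∈ ri A`. Since `x₁ ∈ dom F` and `x₀ ∈ ri (dom F)`, the segment from `x₁` to `x₀` can be
prolonged beyond `x₀` to some `u ∈ dom F`; choosing `(u, v) ∈ gph F ⊆ closure A`, the line segment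
principle yields a point of `ri A` above `x₀`. The same is done for `G` and `Θ`.
-/

open Set Metric

noncomputable section

/-- The graph of a set-valued mapping. -/
def gph {E P : Type*} (F : E → Set P) : Set (E × P) := {q | q.2 ∈ F q.1}

/-- The domain of a set-valued mapping. -/
def domSV {E P : Type*} (F : E → Set P) : Set E := {x | (F x).Nonempty}

theorem ri_nonempty_s9 {E : Type*} [NormedAddCommGroup E] [NormedSpace ℝ E]
    [FiniteDimensional ℝ E] {C : Set E} (hC : Convex ℝ C) (hne : C.Nonempty) :
    (ri C).Nonempty := by
  obtain ⟨a, ha⟩ := hne.intrinsicInterior hC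
  refine ⟨a, intrinsicInterior_subset ha, ?_⟩
  obtain ⟨y, hy, rfl⟩ := mem_intrinsicInterior.1 ha
  obtain ⟨δ, hδ, hb⟩ := Metric.mem_nhds_iff.1 (mem_interior_iff_mem_nhds.1 hy)
  refine ⟨δ, hδ, ?_⟩
  rintro u ⟨hu, hua⟩
  exact @hb ⟨u, hua⟩ hu

/-- The line segment principle for relative interiors. -/
theorem ri_combo {E : Type*} [NormedAddCommGroup E] [NormedSpace ℝ E]
    [FiniteDimensional ℝ E] {C : Set E} (hC : Convex ℝ C) {a b : E} (ha : a ∈ ri C)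
    (hb : b ∈ closure C) {t : ℝ} (ht : 0 < t) (ht1 : t ≤ 1) :
    t • a + (1 - t) • b ∈ ri C := by
  obtain ⟨haC, δ, hδ, hball⟩ := ha
  have hcl : IsClosed (affineSpan ℝ C : Set E) :=
    AffineSubspace.closed_of_finiteDimensional _
  have hbA : b ∈ affineSpan ℝ C := closure_minimal (subset_affineSpan ℝ C) hcl hb
  have haA : a ∈ affineSpan ℝ C := subset_affineSpan ℝ C haC
  have hwA : t • a + (1 - t) • b ∈ affineSpan ℝ C := by
    have h := AffineMap.lineMap_mem t hbA haA
    rw [AffineMap.lineMap_apply_module] at h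
    rwa [add_comm]
  have hε : 0 < t * δ / 2 := by positivity
  obtain ⟨b', hb'C, hb'⟩ := Metric.mem_closure_iff.1 hb _ hε
  have hb'A : b' ∈ affineSpan ℝ C := subset_affineSpan ℝ C hb'C
  have key : Metric.ball (t • a + (1 - t) • b) (t * δ / 2) ∩ (affineSpan ℝ C : Set E) ⊆ C := by
    rintro u ⟨hu, huA⟩
    -- Solve for the point in place of `a` in the combination for `u`; it is `δ`-close to `a`.
    set a' : E := AffineMap.lineMap b' u t⁻¹ with ha'
    have ha'A : a' ∈ affineSpan ℝ C := AffineMap.lineMap_mem _ hb'A huA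
    have hu' : u = t • a' + (1 - t) • b' := by
      rw [ha', AffineMap.lineMap_apply_module]
      match_scalars <;> field_simp
      ring
    have hsub : t • (a' - a) = (u - (t • a + (1 - t) • b)) + (1 - t) • (b - b') := by
      rw [hu']; module
    have hn : t * ‖a' - a‖ < t * δ := by
      have h1 : ‖t • (a' - a)‖ = t * ‖a' - a‖ := by
        rw [norm_smul, Real.norm_of_nonneg ht.le]
      rw [← h1, hsub]
      have h2 : ‖(1 - t) • (b - b')‖ ≤ ‖b - b'‖ := by
        rw [norm_smul, Real.norm_of_nonneg (by linarith)]
        nlinarith [norm_nonneg (b - b')]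
      have h3 := norm_add_le (u - (t • a + (1 - t) • b)) ((1 - t) • (b - b'))
      rw [mem_ball, dist_eq_norm] at hu
      rw [dist_eq_norm] at hb'
      linarith
    have ha'C : a' ∈ C := hball ⟨by
      rw [mem_ball, dist_eq_norm]; exact lt_of_mul_lt_mul_left hn ht.le, ha'A⟩
    rw [hu']
    exact hC ha'C hb'C ht.le (by linarith) (by ring)
  exact ⟨key ⟨mem_ball_self hε, hwA⟩, _, hε, key⟩

theorem ri_convex {E : Type*} [NormedAddCommGroup E] [NormedSpace ℝ E]
    [FiniteDimensional ℝ E] {C : Set E} (hC : Convex ℝ C) : Convex ℝ (ri C) := by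
  refine convex_iff_forall_pos.2 fun x hx y hy a b ha hb hab => ?_
  obtain rfl : b = 1 - a := by linarith
  exact ri_combo hC hx (subset_closure hy.1) ha (by linarith)

/-- A segment of `s` ending at a point `x₀` of the relative interior can be prolonged: `x₀` is a
convex combination of `x₁` and another point of `s`, with positive weight at `x₁`. -/
theorem ri_prolong {E : Type*} [NormedAddCommGroup E] [NormedSpace ℝ E] {s : Set E} {x₀ x₁ : E}
    (h₀ : x₀ ∈ ri s) (h₁ : x₁ ∈ s) :
    ∃ t : ℝ, 0 < t ∧ t ≤ 1 ∧ ∃ u ∈ s, x₀ = t • x₁ + (1 - t) • u := by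
  obtain ⟨h₀s, δ, hδ, hball⟩ := h₀
  set ε : ℝ := δ / (‖x₀ - x₁‖ + 1) with hεdef
  have hpos : 0 < ‖x₀ - x₁‖ + 1 := by positivity
  have hε : 0 < ε := by positivity
  -- The point `x₀ + ε • (x₀ - x₁)`.
  have hu : AffineMap.lineMap x₁ x₀ (1 + ε) ∈ s := by
    refine hball ⟨?_, AffineMap.lineMap_mem _ (subset_affineSpan ℝ s h₁)
      (subset_affineSpan ℝ s h₀s)⟩
    have h : AffineMap.lineMap x₁ x₀ (1 + ε) - x₀ = ε • (x₀ - x₁) := by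
      rw [AffineMap.lineMap_apply_module]; module
    rw [mem_ball, dist_eq_norm, h, norm_smul, Real.norm_of_nonneg hε.le, hεdef,
      div_mul_eq_mul_div, div_lt_iff₀ hpos]
    nlinarith
  refine ⟨ε / (1 + ε), by positivity, ?_, _, hu, ?_⟩
  · rw [div_le_one (by positivity)]; linarith
  · rw [AffineMap.lineMap_apply_module]
    match_scalars <;> field_simp <;> ring

/-- Above a point of `ri (dom F)` lies a point of the relative interior of any convex set
witnessing that `gph F` is nearly convex. -/
theorem exists_mem_ri_above {E P : Type*} [NormedAddCommGroup E] [NormedSpace ℝ E]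
    [FiniteDimensional ℝ E] [NormedAddCommGroup P] [NormedSpace ℝ P] [FiniteDimensional ℝ P]
    {F : E → Set P} {C : Set (E × P)} (hC : Convex ℝ C) (h1 : C ⊆ gph F)
    (h2 : gph F ⊆ closure C) {x₀ : E} (hx : x₀ ∈ ri (domSV F)) :
    ∃ z, (x₀, z) ∈ ri C := by
  have hne : C.Nonempty := by
    obtain ⟨z, hz⟩ := hx.1
    exact closure_nonempty_iff.1 ⟨_, @h2 (x₀, z) hz⟩
  obtain ⟨⟨x₁, z₁⟩, hw⟩ := ri_nonempty_s9 hC hne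
  obtain ⟨t, ht, ht1, u, ⟨v, hv⟩, rfl⟩ :=
    ri_prolong hx (show x₁ ∈ domSV F from ⟨z₁, h1 hw.1⟩)
  exact ⟨t • z₁ + (1 - t) • v, ri_combo hC hw (@h2 (u, v) hv) ht ht1⟩

theorem ri_subset_ri_of_subset_closure {E : Type*} [NormedAddCommGroup E] [NormedSpace ℝ E]
    [FiniteDimensional ℝ E] {C s : Set E} (hC : Convex ℝ C) (h1 : C ⊆ s) (h2 : s ⊆ closure C) :
    ri s ⊆ ri C := by
  intro x₀ hx
  obtain ⟨x₁, hw⟩ := ri_nonempty_s9 hC (closure_nonempty_iff.1 ⟨_, h2 hx.1⟩)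
  obtain ⟨t, ht, ht1, u, hu, rfl⟩ := ri_prolong hx (h1 hw.1)
  exact ri_combo hC hw (h2 hu) ht ht1

theorem composite_nearlyConvex (n p q : ℕ)
    (Θ : Set (EuclideanSpace ℝ (Fin n)))
    (F : EuclideanSpace ℝ (Fin n) → Set (EuclideanSpace ℝ (Fin p)))
    (G : EuclideanSpace ℝ (Fin n) → Set (EuclideanSpace ℝ (Fin q)))
    (hΘ : NearlyConvex Θ) (hF : NearlyConvex (gph F)) (hG : NearlyConvex (gph G))
    (hqc : (ri (domSV F) ∩ ri (domSV G) ∩ ri Θ).Nonempty) :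
    NearlyConvex (gph (fun xy : EuclideanSpace ℝ (Fin n) × EuclideanSpace ℝ (Fin q) =>
      {z | xy.1 ∈ Θ ∧ xy.2 ∈ G xy.1 ∧ z ∈ F xy.1})) := by
  obtain ⟨T, hTc, hT1, hT2⟩ := hΘ
  obtain ⟨A, hAc, hA1, hA2⟩ := hF
  obtain ⟨B, hBc, hB1, hB2⟩ := hG
  obtain ⟨x₀, ⟨hxF, hxG⟩, hxΘ⟩ := hqc
  have hx₀ := ri_subset_ri_of_subset_closure hTc hT1 hT2 hxΘ
  obtain ⟨z₀, hz₀⟩ := exists_mem_ri_above hAc hA1 hA2 hxF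
  obtain ⟨y₀, hy₀⟩ := exists_mem_ri_above hBc hB1 hB2 hxG
  refine ⟨{w | w.1.1 ∈ ri T ∧ (w.1.1, w.2) ∈ ri A ∧ (w.1.1, w.1.2) ∈ ri B}, ?_, ?_, ?_⟩
  · rintro ⟨⟨x, y⟩, z⟩ ⟨h1, h2, h3⟩ ⟨⟨x', y'⟩, z'⟩ ⟨h1', h2', h3'⟩ a b ha hb hab
    exact ⟨ri_convex hTc h1 h1' ha hb hab, ri_convex hAc h2 h2' ha hb hab,
      ri_convex hBc h3 h3' ha hb hab⟩
  · rintro ⟨⟨x, y⟩, z⟩ ⟨h1, h2, h3⟩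
    exact ⟨hT1 h1.1, hB1 h3.1, hA1 h2.1⟩
  · rintro ⟨⟨x, y⟩, z⟩ ⟨h1, h2, h3⟩
    have hlim : Filter.Tendsto
        (fun t : ℝ => t • ((x₀, y₀), z₀) + (1 - t) • ((x, y), z)) (nhdsWithin 0 (Ioc 0 1))
        (nhds ((x, y), z)) := by
      have hc : Continuous (fun t : ℝ => t • ((x₀, y₀), z₀) + (1 - t) • ((x, y), z)) := by
        fun_prop
      have h := hc.tendsto 0
      simp only [zero_smul, sub_zero, one_smul, zero_add] at h
      exact h.mono_left nhdsWithin_le_nhds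
    have : (nhdsWithin (0 : ℝ) (Ioc 0 1)).NeBot := by
      rw [nhdsWithin_Ioc_eq_nhdsGT one_pos]; infer_instance
    refine mem_closure_of_tendsto hlim ?_
    filter_upwards [self_mem_nhdsWithin] with t ht
    exact ⟨ri_combo hTc hx₀ (hT2 h1) ht.1 ht.2, ri_combo hAc hz₀ (@hA2 (x, z) h3) ht.1 ht.2,
      ri_combo hBc hy₀ (@hB2 (x, y) h2) ht.1 ht.2⟩
end
end

section
/- Let F : ℝ^n ⇒ ℝ^q and G : ℝ^p ⇒ ℝ^q be proper nearly convex set-valued mappings, and let A : ℝ^n → ℝ^p be a linear mapping. Define Φ : ℝ^n × ℝ^p ⇒ ℝ^q by Φ(x, y) = F(x) + G(Ax + y) (Minkowski sum). Then Φ is a nearly convex set-valued mapping. -/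
/-!
The graph of `(x, y) ↦ F x + G (A x + y)` is the image of `gph F ×ˢ gph G` under the linear map
`((x, u), (z, v)) ↦ ((x, z - A x), u + v)`. Near convexity is stable under products
(`closure_prod_eq`) and under images by continuous linear maps, since `T '' closure C` is contained
in `closure (T '' C)`; in finite dimension the map above is automatically continuous.
-/

open Set Metric Pointwise

noncomputable section

theorem NearlyConvex.prod {E P : Type*} [NormedAddCommGroup E] [NormedSpace ℝ E]
    [NormedAddCommGroup P] [NormedSpace ℝ P] {s : Set E} {t : Set P}
    (hs : NearlyConvex s) (ht : NearlyConvex t) : NearlyConvex (s ×ˢ t) := by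
  obtain ⟨C, hC, hCs, hsC⟩ := hs
  obtain ⟨D, hD, hDt, htD⟩ := ht
  refine ⟨C ×ˢ D, hC.prod hD, prod_mono hCs hDt, ?_⟩
  rw [closure_prod_eq]
  exact prod_mono hsC htD

theorem NearlyConvex.image {E P : Type*} [NormedAddCommGroup E] [NormedSpace ℝ E]
    [NormedAddCommGroup P] [NormedSpace ℝ P] {s : Set E}
    (hs : NearlyConvex s) (T : E →ₗ[ℝ] P) (hT : Continuous T) : NearlyConvex (T '' s) := by
  obtain ⟨C, hC, hCs, hsC⟩ := hs
  exact ⟨T '' C, hC.linear_image T, image_mono hCs,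
    (image_mono hsC).trans (image_closure_subset_closure_image hT)⟩

/-- The linear map `((x, u), (z, v)) ↦ ((x, z - A x), u + v)`, which carries a pair of points of
`gph F` and `gph G` to a point of the graph of `(x, y) ↦ F x + G (A x + y)`. -/
def sumCompMap {X Y Q : Type*} [AddCommGroup X] [Module ℝ X] [AddCommGroup Y] [Module ℝ Y]
    [AddCommGroup Q] [Module ℝ Q] (A : X →ₗ[ℝ] Y) : ((X × Q) × (Y × Q)) →ₗ[ℝ] ((X × Y) × Q) where
  toFun w := ((w.1.1, w.2.1 - A w.1.1), w.1.2 + w.2.2)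
  map_add' a b := by
    ext1
    · ext1
      · rfl
      · simp; abel
    · simp; abel
  map_smul' c a := by simp [smul_sub]

theorem gph_sum_comp {X Y Q : Type*} [AddCommGroup X] [Module ℝ X] [AddCommGroup Y] [Module ℝ Y]
    [AddCommGroup Q] [Module ℝ Q] (F : X → Set Q) (G : Y → Set Q) (A : X →ₗ[ℝ] Y) :
    gph (fun xy : X × Y => F xy.1 + G (A xy.1 + xy.2)) = sumCompMap A '' (gph F ×ˢ gph G) := by
  ext ⟨⟨x, y⟩, w⟩
  constructor
  · rintro ⟨u, hu, v, hv, huv⟩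
    refine ⟨((x, u), (A x + y, v)), ⟨hu, hv⟩, ?_⟩
    simpa [sumCompMap] using huv
  · rintro ⟨⟨⟨x', u⟩, ⟨z, v⟩⟩, ⟨hu, hv⟩, h⟩
    simp only [sumCompMap, LinearMap.coe_mk, AddHom.coe_mk, Prod.mk.injEq] at h
    obtain ⟨⟨rfl, rfl⟩, rfl⟩ := h
    refine ⟨u, hu, v, ?_, rfl⟩
    simpa [gph] using hv

theorem sum_comp_nearlyConvex (n p q : ℕ)
    (F : EuclideanSpace ℝ (Fin n) → Set (EuclideanSpace ℝ (Fin q)))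
    (G : EuclideanSpace ℝ (Fin p) → Set (EuclideanSpace ℝ (Fin q)))
    (A : EuclideanSpace ℝ (Fin n) →ₗ[ℝ] EuclideanSpace ℝ (Fin p))
    (hF : NearlyConvex (gph F)) (hG : NearlyConvex (gph G))
    (hFprop : (domSV F).Nonempty) (hGprop : (domSV G).Nonempty) :
    NearlyConvex (gph (fun xy : EuclideanSpace ℝ (Fin n) × EuclideanSpace ℝ (Fin p) =>
      F xy.1 + G (A xy.1 + xy.2))) := by
  rw [gph_sum_comp]
  exact (hF.prod hG).image _ (LinearMap.continuous_of_finiteDimensional _)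
end
end
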